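/- Let f be a homeomorphism of the d-dimensional torus 𝕋^d homotopic to the identity, with lift F, and let K ⊆ 𝕋^d be a minimal set of f. Suppose f is an irrational pseudo-rotation on K with rotation vector ρ and has bounded mean motion on K. Then f restricted to K is regularly semi-conjugate to the irrational rotation R_ρ : 𝕋^d → 𝕋^d, x ↦ x + ρ mod ℤ^d; that is, there exists a continuous surjection h : K → 𝕋^d with h∘f = R_ρ∘h on K which admits a lift H : π⁻¹(K) → ℝ^d (π_d∘H = h∘π) satisfying H∘F = H + ρ and sup_{z ∈ π⁻¹(K)} ‖H(z) − z‖ < ∞. -/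

import Mathlib

open Filter Topology

local notation "⟪" x ", " y "⟫" => @inner ℝ _ _ x y

noncomputable section

/-- Euclidean space `ℝ^d`. -/
abbrev Rd (d : ℕ) := EuclideanSpace ℝ (Fin d)

/-- The `d`-torus `𝕋^d = ℝ^d/ℤ^d`, realized as a product of circles. -/
abbrev Torus (d : ℕ) := Fin d → AddCircle (1 : ℝ)

/-- The quotient map `π : ℝ^d → 𝕋^d`. -/
def projT {d : ℕ} (z : Rd d) : Torus d := fun i => (z i : AddCircle (1 : ℝ))

/-- An integer vector viewed as an element of `ℝ^d`. -/
def intVec {d : ℕ} (m : Fin d → ℤ) : Rd d := WithLp.toLp 2 fun i => (m i : ℝ)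

/-- A real vector viewed as an element of `ℝ^k`. -/
def vecR {k : ℕ} (ρ : Fin k → ℝ) : Rd k := WithLp.toLp 2 fun i => ρ i

/-- `F : ℝ^d → ℝ^d` is a lift of `f : 𝕋^d → 𝕋^d`:  `π ∘ F = f ∘ π` and
`F (z + m) = F z + m` for every integer vector `m`.  The existence of such a lift
expresses that `f` is homotopic to the identity. -/
def IsLift {d : ℕ} (f : Torus d ≃ₜ Torus d) (F : Rd d ≃ₜ Rd d) : Prop :=
  (∀ z : Rd d, projT (F z) = f (projT z)) ∧
  ∀ (z : Rd d) (m : Fin d → ℤ), F (z + intVec m) = F z + intVec m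

/-- The `n`-th iterate (`n ∈ ℤ`) of a homeomorphism. -/
def iterZ {X : Type*} [TopologicalSpace X] (F : X ≃ₜ X) (n : ℤ) : X → X := ⇑(F.toEquiv ^ n)

/-- `K` is a minimal set of `f`: nonempty, compact, invariant, and every orbit in `K`
is dense in `K`. -/
def IsMinimalSet {d : ℕ} (f : Torus d ≃ₜ Torus d) (K : Set (Torus d)) : Prop :=
  K.Nonempty ∧ IsCompact K ∧ f '' K = K ∧
  ∀ x ∈ K, K ⊆ closure (Set.range fun n : ℕ => (⇑f)^[n] x)

/-- `ρ ∈ ℝ^k` is totally irrational: `1, ρ₁, …, ρ_k` are linearly independent over `ℚ`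
(equivalently, over `ℤ`). -/
def TotallyIrrational {k : ℕ} (ρ : Fin k → ℝ) : Prop :=
  ∀ (m : Fin k → ℤ) (n : ℤ), (∑ i, (m i : ℝ) * ρ i) = (n : ℝ) → m = 0 ∧ n = 0

/-- The rotation `R_ρ : 𝕋^k → 𝕋^k`, `x ↦ x + ρ mod ℤ^k`. -/
def rotT {k : ℕ} (ρ : Fin k → ℝ) : Torus k → Torus k :=
  fun x i => x i + (ρ i : AddCircle (1 : ℝ))

/-- `f` (with lift `F`) is a pseudo-rotation with rotation vector `ρ` on the invariant
set `K`: `(Fⁿ z − z)/n → ρ` for every `z ∈ π⁻¹(K)`. -/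
def IsPseudoRotationOn {d : ℕ} (F : Rd d ≃ₜ Rd d) (ρ : Rd d) (K : Set (Torus d)) : Prop :=
  ∀ z : Rd d, projT z ∈ K →
    Tendsto (fun n : ℕ => (n : ℝ)⁻¹ • ((⇑F)^[n] z - z)) atTop (𝓝 ρ)

/-- Bounded mean motion on `K`: `‖Fⁿ z − z − n ρ‖ ≤ c` for all `n ∈ ℤ` and `z ∈ π⁻¹(K)`. -/
def BddMeanMotionOn {d : ℕ} (F : Rd d ≃ₜ Rd d) (ρ : Rd d) (K : Set (Torus d)) : Prop :=
  ∃ c : ℝ, 0 ≤ c ∧ ∀ (n : ℤ) (z : Rd d), projT z ∈ K →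
    ‖iterZ F n z - z - (n : ℝ) • ρ‖ ≤ c

/-- A lower semicontinuous function that is constant along orbits, each of which is dense in `K`,
is constant on `K`. -/
theorem LowerSemicontinuousOn.eq_of_invariant_of_dense_orbits {X : Type*} [TopologicalSpace X]
    {f : X → X} {K : Set X} (hf : Set.MapsTo f K K)
    (hdense : ∀ x ∈ K, K ⊆ closure (Set.range fun n : ℕ => f^[n] x))
    {D : X → ℝ} (hD : LowerSemicontinuousOn D K) (hinv : ∀ x ∈ K, D (f x) = D x)
    {x y : X} (hx : x ∈ K) (hy : y ∈ K) : D x = D y := by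
  have key : ∀ x ∈ K, ∀ y ∈ K, D y ≤ D x := by
    intro x hx y hy
    by_contra! hlt
    have hev := eventually_nhdsWithin_iff.1 (hD y hy (D x) hlt)
    obtain ⟨_, hz, n, rfl⟩ := mem_closure_iff_nhds.1 (hdense x hx hy) _ hev
    have hn : ∀ n : ℕ, D (f^[n] x) = D x := by
      intro n
      induction n with
      | zero => rfl
      | succ n ih => rw [Function.iterate_succ_apply', hinv _ (hf.iterate n hx), ih]
    exact (hn n).not_gt (hz (hf.iterate n hx))
  exact le_antisymm (key y hy x hx) (key x hx y hy)

section GottschalkHedlund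

variable {X : Type*} {f : X → X} {K : Set X} {ψ : ℤ → X → ℝ} {c : ℝ}

theorem bddAbove_range_of_abs_le {ι : Type*} {u : ι → ℝ} (h : ∀ n, |u n| ≤ c) :
    BddAbove (Set.range u) :=
  ⟨c, Set.forall_mem_range.2 fun n => (abs_le.1 (h n)).2⟩

theorem bddBelow_range_of_abs_le {ι : Type*} {u : ι → ℝ} (h : ∀ n, |u n| ≤ c) :
    BddBelow (Set.range u) :=
  ⟨-c, Set.forall_mem_range.2 fun n => (abs_le.1 (h n)).1⟩

/-- The supremum of a bounded cocycle solves the cohomological equation. -/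
theorem iSup_cocycle_apply (hcoc : ∀ n, ∀ x ∈ K, ψ n (f x) = ψ (n + 1) x - ψ 1 x)
    (hbdd : ∀ n, ∀ x ∈ K, |ψ n x| ≤ c) {x : X} (hx : x ∈ K) :
    ⨆ n, ψ n (f x) = (⨆ n, ψ n x) - ψ 1 x := by
  simp_rw [hcoc _ x hx]
  rw [← ciSup_sub (bddAbove_range_of_abs_le fun n => hbdd (n + 1) x hx)]
  congr 1
  exact (Equiv.addRight (1 : ℤ)).iSup_comp (g := fun n => ψ n x)

theorem iInf_cocycle_apply (hcoc : ∀ n, ∀ x ∈ K, ψ n (f x) = ψ (n + 1) x - ψ 1 x)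
    (hbdd : ∀ n, ∀ x ∈ K, |ψ n x| ≤ c) {x : X} (hx : x ∈ K) :
    ⨅ n, ψ n (f x) = (⨅ n, ψ n x) - ψ 1 x := by
  simp_rw [hcoc _ x hx]
  rw [← ciInf_sub (bddBelow_range_of_abs_le fun n => hbdd (n + 1) x hx)]
  congr 1
  exact (Equiv.addRight (1 : ℤ)).iInf_comp (g := fun n => ψ n x)

/-- **Gottschalk–Hedlund**: over a minimal set, the supremum of a bounded continuous cocycle is
continuous. -/
theorem continuousOn_iSup_cocycle [TopologicalSpace X] (hf : Set.MapsTo f K K)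
    (hdense : ∀ x ∈ K, K ⊆ closure (Set.range fun n : ℕ => f^[n] x))
    (hcont : ∀ n, ContinuousOn (ψ n) K)
    (hcoc : ∀ n, ∀ x ∈ K, ψ n (f x) = ψ (n + 1) x - ψ 1 x)
    (hbdd : ∀ n, ∀ x ∈ K, |ψ n x| ≤ c) : ContinuousOn (fun x => ⨆ n, ψ n x) K := by
  have hsup : LowerSemicontinuousOn (fun x => ⨆ n, ψ n x) K :=
    lowerSemicontinuousOn_ciSup (fun x hx => bddAbove_range_of_abs_le fun n => hbdd n x hx)
      fun n => (hcont n).lowerSemicontinuousOn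
  have hinf : UpperSemicontinuousOn (fun x => ⨅ n, ψ n x) K :=
    upperSemicontinuousOn_ciInf (fun x hx => bddBelow_range_of_abs_le fun n => hbdd n x hx)
      fun n => (hcont n).upperSemicontinuousOn
  have hosc : LowerSemicontinuousOn (fun x => (⨆ n, ψ n x) + -⨅ n, ψ n x) K :=
    hsup.add hinf.neg
  refine continuousOn_iff_lower_upperSemicontinuousOn.2 ⟨hsup, fun x hx => ?_⟩
  have hshift := (hinf.add (upperSemicontinuousOn_const
    (z := (⨆ n, ψ n x) + -⨅ n, ψ n x))) x hx
  refine UpperSemicontinuousWithinAt.congr_of_eventuallyEq hshift hx ?_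
  filter_upwards [self_mem_nhdsWithin] with y hy
  have := hosc.eq_of_invariant_of_dense_orbits hf hdense (fun z hz => by
    rw [iSup_cocycle_apply hcoc hbdd hz, iInf_cocycle_apply hcoc hbdd hz]; ring) hx hy
  linarith

end GottschalkHedlund

section Kronecker

open MeasureTheory UnitAddTorus

variable {d : ℕ}

theorem mFourier_apply_add (m : Fin d → ℤ) (x v : Torus d) :
    mFourier m (x + v) = mFourier m x * mFourier m v := by
  simp [mFourier, fourier_apply, smul_add, AddCircle.toCircle_add, Finset.prod_mul_distrib]

theorem mFourier_projT (m : Fin d → ℤ) (z : Rd d) :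
    mFourier m (projT z) = Complex.exp (2 * Real.pi * Complex.I * (∑ i, (m i : ℝ) * z i : ℝ)) := by
  simp [mFourier, projT, ← Complex.exp_sum, Finset.mul_sum, mul_assoc]

theorem TotallyIrrational.mFourier_ne_one {ρ : Rd d} (hρ : TotallyIrrational fun i => ρ i)
    {m : Fin d → ℤ} (hm : m ≠ 0) : mFourier m (projT ρ) ≠ 1 := by
  intro h
  rw [mFourier_projT, Complex.exp_eq_one_iff] at h
  obtain ⟨n, hn⟩ := h
  refine hm (hρ m n ?_).1
  have h2 : (2 * Real.pi * Complex.I : ℂ) ≠ 0 := Complex.two_pi_I_ne_zero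
  rw [mul_comm (n : ℂ)] at hn
  exact_mod_cast mul_left_cancel₀ h2 hn

/-- The integrals of the characters against a rotation-invariant probability measure. -/
theorem integral_mFourier_of_measurePreserving {v : Torus d}
    (hv : ∀ m : Fin d → ℤ, m ≠ 0 → mFourier m v ≠ 1) (μ : Measure (Torus d))
    [IsProbabilityMeasure μ] (hμ : MeasurePreserving (· + v) μ μ) (m : Fin d → ℤ) :
    ∫ x, mFourier m x ∂μ = if m = 0 then 1 else 0 := by
  split_ifs with hm
  · simp [hm, mFourier_zero]
  · have h := hμ.integral_comp (Homeomorph.addRight v).measurableEmbedding (mFourier m)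
    simp_rw [mFourier_apply_add, integral_mul_const] at h
    by_contra h0
    exact hv m hm (mul_left_cancel₀ h0 (h.trans (mul_one _).symm))

/-- A rotation of the torus by a vector on which no nontrivial character is trivial is
uniquely ergodic. -/
theorem measure_eq_of_measurePreserving_add {v : Torus d}
    (hv : ∀ m : Fin d → ℤ, m ≠ 0 → mFourier m v ≠ 1) (μ ν : Measure (Torus d))
    [IsProbabilityMeasure μ] [IsProbabilityMeasure ν]
    (hμ : MeasurePreserving (· + v) μ μ) (hν : MeasurePreserving (· + v) ν ν) : μ = ν := by
  have hint : ∀ (κ : Measure (Torus d)) [IsProbabilityMeasure κ] (g : C(Torus d, ℂ)),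
      Integrable g κ := fun κ _ g =>
    g.continuous.integrable_of_hasCompactSupport (HasCompactSupport.of_compactSpace g)
  have hcont : ∀ (κ : Measure (Torus d)) [IsProbabilityMeasure κ],
      Continuous fun g : C(Torus d, ℂ) => ∫ x, g x ∂κ := by
    intro κ _
    refine (LipschitzWith.of_dist_le_mul (K := 1) fun g g' => ?_).continuous
    rw [dist_eq_norm, ← integral_sub (hint κ g) (hint κ g'), dist_eq_norm]
    simpa using norm_integral_le_of_norm_le_const (μ := κ)
      (Filter.Eventually.of_forall fun x => (g - g').norm_coe_le_norm x)
  have hspan : ∀ g ∈ Submodule.span ℂ (Set.range (mFourier (d := Fin d))),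
      ∫ x, g x ∂μ = ∫ x, g x ∂ν := by
    intro g hg
    induction hg using Submodule.span_induction with
    | mem g hg =>
      obtain ⟨m, rfl⟩ := hg
      rw [integral_mFourier_of_measurePreserving hv μ hμ,
        integral_mFourier_of_measurePreserving hv ν hν]
    | zero => simp
    | add g g' _ _ h h' =>
      simp only [ContinuousMap.add_apply]
      rw [integral_add (hint μ g) (hint μ g'), integral_add (hint ν g) (hint ν g'), h, h']
    | smul a g _ h =>
      simp only [ContinuousMap.smul_apply, integral_smul, h]
  have hall : ∀ g : C(Torus d, ℂ), ∫ x, g x ∂μ = ∫ x, g x ∂ν := by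
    intro g
    have hg : g ∈ (Submodule.span ℂ (Set.range (mFourier (d := Fin d)))).topologicalClosure := by
      rw [span_mFourier_closure_eq_top]; trivial
    exact closure_minimal hspan (isClosed_eq (hcont μ) (hcont ν)) hg
  refine ext_of_forall_integral_eq_of_IsFiniteMeasure fun g => ?_
  have := hall ⟨fun x => (g x : ℂ), by fun_prop⟩
  simp only [ContinuousMap.coe_mk, integral_complex_ofReal] at this
  exact_mod_cast this

/-- **Kronecker's theorem**: if no nontrivial character is trivial on `v`, then the multiples of
`v` are dense in the torus. -/
theorem denseRange_nsmul_of_mFourier_ne_one {v : Torus d}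
    (hv : ∀ m : Fin d → ℤ, m ≠ 0 → mFourier m v ≠ 1) :
    DenseRange fun n : ℕ => n • v := by
  rw [← denseRange_zsmul_iff_nsmul]
  let S : AddSubgroup (Torus d) := (AddSubgroup.zmultiples v).topologicalClosure
  have hSclosed : IsClosed (S : Set (Torus d)) := AddSubgroup.isClosed_topologicalClosure _
  have : CompactSpace S := isCompact_iff_compactSpace.1 hSclosed.isCompact
  have hvS : v ∈ S := AddSubgroup.le_topologicalClosure _ (AddSubgroup.mem_zmultiples v)
  let σ : Measure S := Measure.addHaarMeasure ⊤
  have : IsProbabilityMeasure σ := ⟨Measure.addHaarMeasure_self⟩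
  let ν : Measure (Torus d) := Measure.addHaarMeasure ⊤
  have : IsProbabilityMeasure ν := ⟨Measure.addHaarMeasure_self⟩
  have hval : Measurable (Subtype.val : S → Torus d) := measurable_subtype_coe
  have : IsProbabilityMeasure (σ.map Subtype.val) :=
    Measure.isProbabilityMeasure_map hval.aemeasurable
  have hinv : MeasurePreserving (· + v) (σ.map Subtype.val) (σ.map Subtype.val) := by
    refine ⟨measurable_add_const v, ?_⟩
    rw [Measure.map_map (measurable_add_const v) hval]
    conv_rhs => rw [← map_add_right_eq_self σ ⟨v, hvS⟩]
    rw [Measure.map_map hval (measurable_add_const _)]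
    rfl
  have heq := measure_eq_of_measurePreserving_add hv _ ν hinv (measurePreserving_add_right ν v)
  have hzero : ν (S : Set (Torus d))ᶜ = 0 := by
    rw [← heq, Measure.map_apply hval hSclosed.measurableSet.compl, Set.preimage_compl,
      Subtype.coe_preimage_self, Set.compl_univ, measure_empty]
  have hempty := hSclosed.isOpen_compl.eq_empty_of_measure_zero hzero
  intro x
  have hx : x ∈ S := by
    by_contra hx
    exact (Set.eq_empty_iff_forall_notMem.1 hempty x) hx
  rwa [← SetLike.mem_coe, AddSubgroup.topologicalClosure_coe, AddSubgroup.coe_zmultiples] at hx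

/-- A nonempty closed set that is invariant under a totally irrational rotation is the whole
torus. -/
theorem TotallyIrrational.eq_univ_of_mapsTo_rotT {ρ : Rd d} (hρ : TotallyIrrational fun i => ρ i)
    {A : Set (Torus d)} (hA : IsClosed A) (hne : A.Nonempty)
    (hmaps : Set.MapsTo (rotT fun i => ρ i) A A) : A = Set.univ := by
  obtain ⟨a, ha⟩ := hne
  have hdense := denseRange_nsmul_of_mFourier_ne_one fun m hm => hρ.mFourier_ne_one (m := m) hm
  have horbit : ∀ n : ℕ, a + n • projT ρ ∈ A := by
    intro n
    induction n with
    | zero => simpa using ha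
    | succ n ih =>
      rw [succ_nsmul, ← add_assoc]
      exact hmaps ih
  have hsub : closure (Set.range fun n : ℕ => n • projT ρ) ⊆ (a + ·) ⁻¹' A :=
    closure_minimal (Set.range_subset_iff.2 horbit) (hA.preimage (continuous_const_add a))
  refine Set.eq_univ_of_forall fun x => ?_
  simpa using hsub (hdense (x - a))

end Kronecker

section Lift

variable {d : ℕ}

theorem isOpenQuotientMap_projT : IsOpenQuotientMap (projT : Rd d → Torus d) :=
  (IsOpenQuotientMap.piMap fun _ : Fin d =>
    (QuotientAddGroup.isOpenQuotientMap_mk :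
      IsOpenQuotientMap ((↑) : ℝ → AddCircle (1 : ℝ)))).comp
    (EuclideanSpace.equiv (Fin d) ℝ).toHomeomorph.isOpenQuotientMap

theorem exists_eq_add_intVec_of_projT_eq {z w : Rd d} (h : projT z = projT w) :
    ∃ m, w = z + intVec m := by
  have hi : ∀ i, ∃ n : ℤ, w i = z i + n := by
    intro i
    obtain ⟨n, hn⟩ := (QuotientAddGroup.eq_iff_sub_mem).1 (congrFun h i).symm
    exact ⟨n, by simp at hn; linarith⟩
  choose m hm using hi
  exact ⟨m, by ext i; simp [intVec, hm]⟩

theorem iterZ_add_one_apply {X : Type*} [TopologicalSpace X] (F : X ≃ₜ X) (n : ℤ) (z : X) :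
    iterZ F (n + 1) z = iterZ F n (F z) := by
  simp [iterZ, zpow_add_one, Equiv.Perm.mul_apply]

theorem continuous_iterZ {X : Type*} [TopologicalSpace X] (F : X ≃ₜ X) (n : ℤ) :
    Continuous (iterZ F n) := by
  have h : iterZ F n = ⇑(F ^ n) := by
    let φ : (X ≃ₜ X) →* Equiv.Perm X :=
      { toFun := Homeomorph.toEquiv, map_one' := rfl, map_mul' := fun _ _ => rfl }
    exact congrArg DFunLike.coe (map_zpow φ F n).symm
  rw [h]
  exact (F ^ n).continuous

theorem iterZ_apply_add {X : Type*} [TopologicalSpace X] [Add X] {F : X ≃ₜ X} {v : X}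
    (h : ∀ z, F (z + v) = F z + v) (n : ℤ) (z : X) : iterZ F n (z + v) = iterZ F n z + v := by
  induction n generalizing z with
  | zero => rfl
  | succ n ih => rw [iterZ_add_one_apply, iterZ_add_one_apply, h, ih]
  | pred n ih =>
    obtain ⟨w, rfl⟩ := F.surjective z
    rw [← h, ← iterZ_add_one_apply, ← iterZ_add_one_apply, sub_add_cancel, ih]

/-- The deviation `z ↦ Fⁿ z - z - n ρ` of a lift from the translation by `n ρ` descends to a
continuous function on the torus. -/
theorem IsLift.exists_deviation {f : Torus d ≃ₜ Torus d} {F : Rd d ≃ₜ Rd d} (hF : IsLift f F)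
    (ρ : Rd d) (n : ℤ) : ∃ ψ : Torus d → Rd d, Continuous ψ ∧
      ∀ z, ψ (projT z) = iterZ F n z - z - (n : ℝ) • ρ := by
  have hfac : Function.FactorsThrough (fun z => iterZ F n z - z - (n : ℝ) • ρ) projT := by
    intro z w h
    obtain ⟨m, rfl⟩ := exists_eq_add_intVec_of_projT_eq h
    simp only [iterZ_apply_add (fun z => hF.2 z m)]
    abel
  have hlift := fun z => hfac.extend_apply (fun _ => 0) z
  refine ⟨_, isOpenQuotientMap_projT.continuous_comp_iff.1 ?_, hlift⟩
  refine (((continuous_iterZ F n).sub continuous_id).sub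
    (continuous_const (y := (n : ℝ) • ρ))).congr fun z => (hlift z).symm

end Lift

/-- **Proposition A.**  If `f ∈ Homeo₀(𝕋^d)` has a minimal set `K` on which it is an
irrational pseudo-rotation with bounded mean motion, then `f|_K` is regularly
semi-conjugate to the irrational rotation `R_ρ` on `𝕋^d`. -/
theorem statement0 {d : ℕ} (f : Torus d ≃ₜ Torus d) (F : Rd d ≃ₜ Rd d) (hF : IsLift f F)
    (K : Set (Torus d)) (hK : IsMinimalSet f K) (ρ : Rd d)
    (hρ : TotallyIrrational (fun i => ρ i))
    (hpr : IsPseudoRotationOn F ρ K) (hbmm : BddMeanMotionOn F ρ K) :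
    ∃ h : Torus d → Torus d, ContinuousOn h K ∧ h '' K = Set.univ ∧
      (∀ x ∈ K, h (f x) = rotT (fun i => ρ i) (h x)) ∧
      ∃ H : Rd d → Rd d,
        (∀ z : Rd d, projT z ∈ K → projT (H z) = h (projT z)) ∧
        (∀ z : Rd d, projT z ∈ K → H (F z) = H z + ρ) ∧
        ∃ c : ℝ, ∀ z : Rd d, projT z ∈ K → ‖H z - z‖ ≤ c := by
  obtain ⟨hne, hcpt, hinv, hdense⟩ := hK
  obtain ⟨c, -, hc⟩ := hbmm
  have hmaps : Set.MapsTo f K K := Set.mapsTo_iff_image_subset.2 hinv.subset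
  choose ψ hψcont hψ using fun n => hF.exists_deviation ρ n
  have hcoc : ∀ i n, ∀ x ∈ K, ψ n (f x) i = ψ (n + 1) x i - ψ 1 x i := by
    intro i n x _
    obtain ⟨z, rfl⟩ := isOpenQuotientMap_projT.surjective x
    rw [← hF.1, hψ, hψ, hψ, iterZ_add_one_apply]
    simp [iterZ]
    ring
  have hbdd : ∀ i n, ∀ x ∈ K, |ψ n x i| ≤ c := by
    intro i n x hx
    obtain ⟨z, rfl⟩ := isOpenQuotientMap_projT.surjective x
    rw [hψ]
    exact (PiLp.norm_apply_le _ i).trans (hc n z hx)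
  let g : Fin d → Torus d → ℝ := fun i x => ⨆ n, ψ n x i
  have hgcont : ∀ i, ContinuousOn (g i) K := fun i =>
    continuousOn_iSup_cocycle hmaps hdense
      (fun n => ((EuclideanSpace.proj i).continuous.comp (hψcont n)).continuousOn)
      (hcoc i) (hbdd i)
  have hgf : ∀ i, ∀ x ∈ K, g i (f x) = g i x - ψ 1 x i := fun i x hx =>
    iSup_cocycle_apply (hcoc i) (hbdd i) hx
  let h : Torus d → Torus d := fun x i => x i + (g i x : AddCircle (1 : ℝ))
  let H : Rd d → Rd d := fun z => WithLp.toLp 2 fun i => z i + g i (projT z)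
  have hHh : ∀ z, projT (H z) = h (projT z) := fun z => by
    ext i
    simp [projT, H, h]
  have hHF : ∀ z, projT z ∈ K → H (F z) = H z + ρ := by
    intro z hz
    ext i
    simp only [H, PiLp.add_apply]
    rw [hF.1, hgf i _ hz, hψ]
    simp [iterZ]
    ring
  have hhcont : ContinuousOn h K := continuousOn_pi.2 fun i =>
    (continuous_apply i).continuousOn.add
      ((AddCircle.continuous_mk' (1 : ℝ)).comp_continuousOn (hgcont i))
  have hhf : ∀ x ∈ K, h (f x) = rotT (fun i => ρ i) (h x) := by
    intro x hx
    obtain ⟨z, rfl⟩ := isOpenQuotientMap_projT.surjective x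
    rw [← hF.1, ← hHh, ← hHh, hHF z hx]
    ext i
    simp [projT, rotT]
  refine ⟨h, hhcont, ?_, hhf, H, fun z _ => hHh z, hHF, ?_⟩
  · refine hρ.eq_univ_of_mapsTo_rotT (hcpt.image_of_continuousOn hhcont).isClosed
      (hne.image h) ?_
    rintro _ ⟨x, hx, rfl⟩
    exact ⟨f x, hmaps hx, hhf x hx⟩
  · have hG : ContinuousOn (fun x => (WithLp.toLp 2 fun i => g i x : Rd d)) K :=
      (PiLp.continuous_toLp 2 _).comp_continuousOn (continuousOn_pi.2 hgcont)
    obtain ⟨C, hC⟩ := hcpt.exists_bound_of_continuousOn hG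
    refine ⟨C, fun z hz => ?_⟩
    have hz' : H z - z = WithLp.toLp 2 fun i => g i (projT z) := by
      ext i
      simp [H]
    exact hz' ▸ hC _ hz
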